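/- Let y be a quasi shell solution and suppose C_l > 0 is a constant such that p(r) ≥ C_l γ(r)^{q+1}/r⁴ for all r ∈ [R₀, 2R₀] with γ(r) ≥ 0. Then γ(r)^{q+1} ≤ r²/(4πC_l) for all r ∈ [R₀, 2R₀]; equivalently γ(r) ≤ C_γ r^{2/(q+1)} with C_γ = (4πC_l)^{−1/(q+1)}. -/

import Mathlib

open MeasureTheory Real Set Filter

/-- The constant `c_ℓ = 2π ∫₀¹ s^ℓ (1-s)^{-1/2} ds`. -/
noncomputable def cConst (ℓ : ℝ) : ℝ :=
  2 * π * ∫ s in Set.Ioc (0 : ℝ) 1, s ^ ℓ / Real.sqrt (1 - s)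

/-- Energy density of the massless Einstein--Vlasov ansatz. -/
noncomputable def rho (k ℓ L0 : ℝ) (y : ℝ → ℝ) (r : ℝ) : ℝ :=
  cConst ℓ * r ^ (2 * ℓ) *
    ∫ ε in Set.Ioc (Real.sqrt L0 / r) (Real.exp (y r)),
      (1 - ε * Real.exp (-(y r))) ^ k * ε ^ 2 * (ε ^ 2 - L0 / r ^ 2) ^ (ℓ + 1 / 2)

/-- Radial pressure of the massless Einstein--Vlasov ansatz. -/
noncomputable def pres (k ℓ L0 : ℝ) (y : ℝ → ℝ) (r : ℝ) : ℝ :=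
  (cConst ℓ / (2 * ℓ + 3)) * r ^ (2 * ℓ) *
    ∫ ε in Set.Ioc (Real.sqrt L0 / r) (Real.exp (y r)),
      (1 - ε * Real.exp (-(y r))) ^ k * (ε ^ 2 - L0 / r ^ 2) ^ (ℓ + 3 / 2)

/-- The Hawking mass `m(r) = 4π ∫₀ʳ s² ϱ(s) ds`. -/
noncomputable def hawkingMass (k ℓ L0 : ℝ) (y : ℝ → ℝ) (r : ℝ) : ℝ :=
  4 * π * ∫ s in Set.Ioc (0 : ℝ) r, s ^ 2 * rho k ℓ L0 y s

/-- The characteristic function `γ(r) = y(r) - (1/2) ln (L₀ / r²)`. -/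
noncomputable def charFn (L0 : ℝ) (y : ℝ → ℝ) (r : ℝ) : ℝ :=
  y r - (1 / 2) * Real.log (L0 / r ^ 2)

/-- The inner radius `R₀ = √L₀ e^{-y(0)}`. -/
noncomputable def innerRadius (L0 : ℝ) (y : ℝ → ℝ) : ℝ :=
  Real.sqrt L0 * Real.exp (-(y 0))

/-- A quasi shell solution of the massless Einstein--Vlasov system. -/
def QuasiShell (k ℓ L0 : ℝ) (y : ℝ → ℝ) : Prop :=
  ContDiffOn ℝ 1 y (Set.Ici 0) ∧
  ∀ r > 0, 2 * hawkingMass k ℓ L0 y r / r < 1 ∧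
    HasDerivAt y
      (-(1 - 2 * hawkingMass k ℓ L0 y r / r)⁻¹ *
        (4 * π * r * pres k ℓ L0 y r + hawkingMass k ℓ L0 y r / r ^ 2)) r

/-!
Nonnegativity of the mass and the pressure turns the equation for `y` into `y' ≤ -4πrp`, so
`γ' ≤ 1/r - 4πrp`. Write `K = 4πC_l` and `n = q + 1`. Where `γ` touches the barrier
`K^{-1/n} r^{2/n}`, the lower bound on `p` gives `4πrp ≥ Kγ^n/r³ = 1/r`, hence `γ' ≤ 0`, whereas
the barrier is strictly increasing. Since `y` decreases, `γ(R₀) = y(R₀) - y(0) ≤ 0`: `γ` starts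
below the barrier and can never cross it.
-/

section Barrier

variable {K n r : ℝ}

/-- The barrier `K^{-1/n} r^{2/n}` for the characteristic function, i.e. the solution `γ` of
`K γⁿ = r²`. -/
noncomputable def radialBarrier (K n r : ℝ) : ℝ :=
  K ^ (-(1 / n)) * r ^ (2 / n)

theorem radialBarrier_pos (hK : 0 < K) (hr : 0 < r) : 0 < radialBarrier K n r := by
  unfold radialBarrier
  positivity

theorem radialBarrier_rpow (hK : 0 ≤ K) (hn : n ≠ 0) (hr : 0 ≤ r) :
    radialBarrier K n r ^ n = r ^ 2 / K := by
  rw [radialBarrier, mul_rpow (by positivity) (by positivity), ← rpow_mul hK, ← rpow_mul hr,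
    neg_mul, div_mul_cancel₀ _ hn, div_mul_cancel₀ _ hn, rpow_neg_one, rpow_two,
    inv_mul_eq_div]

theorem hasDerivAt_radialBarrier (hr : r ≠ 0) :
    HasDerivAt (radialBarrier K n) (K ^ (-(1 / n)) * (2 / n * r ^ (2 / n - 1))) r :=
  (hasDerivAt_rpow_const (Or.inl hr)).const_mul _

theorem le_radialBarrier_of_deriv_right_le {a b : ℝ} (hK : 0 < K) (hn : 0 < n) (ha : 0 < a)
    {γ γ' : ℝ → ℝ} (hγ : ContinuousOn γ (Icc a b))
    (hγ' : ∀ r ∈ Ico a b, HasDerivWithinAt γ (γ' r) (Ici r) r)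
    (hγa : γ a ≤ radialBarrier K n a)
    (bound : ∀ r ∈ Ico a b, 0 ≤ γ r → γ' r ≤ r⁻¹ - K * γ r ^ n / r ^ 3) :
    ∀ r ∈ Icc a b, γ r ≤ radialBarrier K n r := by
  have hderiv {r : ℝ} (hr : a ≤ r) :=
    hasDerivAt_radialBarrier (K := K) (n := n) (ha.trans_le hr).ne'
  refine image_le_of_deriv_right_lt_deriv_boundary' hγ hγ' hγa
    (fun r hr ↦ (hderiv hr.1).continuousAt.continuousWithinAt)
    (fun r hr ↦ (hderiv hr.1).hasDerivWithinAt) fun r hr hcontact ↦ ?_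
  have hr₀ : 0 < r := ha.trans_le hr.1
  have hγr : 0 ≤ γ r := hcontact ▸ (radialBarrier_pos hK hr₀).le
  calc γ' r ≤ r⁻¹ - K * γ r ^ n / r ^ 3 := bound r hr hγr
    _ = 0 := by
      rw [hcontact, radialBarrier_rpow hK.le hn.ne' hr₀.le]
      field_simp
      ring
    _ < K ^ (-(1 / n)) * (2 / n * r ^ (2 / n - 1)) := by positivity

end Barrier

section Matter

variable {k ℓ L0 r : ℝ} {y : ℝ → ℝ}

theorem one_sub_mul_exp_neg_nonneg {ε Y : ℝ} (h : ε ≤ exp Y) : 0 ≤ 1 - ε * exp (-Y) := by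
  rwa [sub_nonneg, exp_neg, mul_inv_le_iff₀ (exp_pos Y), one_mul]

theorem sq_sub_div_sq_nonneg {ε : ℝ} (hr : 0 < r) (h : √L0 / r ≤ ε) :
    0 ≤ ε ^ 2 - L0 / r ^ 2 := by
  rw [div_le_iff₀ hr, sqrt_le_iff, mul_pow] at h
  rw [sub_nonneg, div_le_iff₀ (by positivity)]
  exact h.2

theorem cConst_nonneg (ℓ : ℝ) : 0 ≤ cConst ℓ :=
  mul_nonneg (by positivity) <| setIntegral_nonneg measurableSet_Ioc fun _ hs ↦
    div_nonneg (rpow_nonneg hs.1.le _) (sqrt_nonneg _)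

theorem rho_nonneg (hr : 0 < r) : 0 ≤ rho k ℓ L0 y r := by
  refine mul_nonneg (mul_nonneg (cConst_nonneg ℓ) (rpow_nonneg hr.le _)) <|
    setIntegral_nonneg measurableSet_Ioc fun ε hε ↦ ?_
  have hdist := one_sub_mul_exp_neg_nonneg hε.2
  have hmom := sq_sub_div_sq_nonneg hr hε.1.le
  positivity

theorem pres_nonneg (hl : -(3 / 2) ≤ ℓ) (hr : 0 < r) : 0 ≤ pres k ℓ L0 y r := by
  have hcoeff : 0 ≤ cConst ℓ / (2 * ℓ + 3) := div_nonneg (cConst_nonneg ℓ) (by linarith)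
  refine mul_nonneg (mul_nonneg hcoeff (rpow_nonneg hr.le _)) <|
    setIntegral_nonneg measurableSet_Ioc fun ε hε ↦ ?_
  have hdist := one_sub_mul_exp_neg_nonneg hε.2
  have hmom := sq_sub_div_sq_nonneg hr hε.1.le
  positivity

theorem hawkingMass_nonneg : 0 ≤ hawkingMass k ℓ L0 y r :=
  mul_nonneg (by positivity) <| setIntegral_nonneg measurableSet_Ioc fun _ hs ↦
    mul_nonneg (sq_nonneg _) (rho_nonneg hs.1)

end Matter

section CharFn

variable {L0 r : ℝ} {y : ℝ → ℝ}

theorem innerRadius_pos (hL : 0 < L0) : 0 < innerRadius L0 y :=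
  mul_pos (sqrt_pos.2 hL) (exp_pos _)

theorem charFn_eq_add_log (hL : L0 ≠ 0) (hr : r ≠ 0) :
    charFn L0 y r = y r - 1 / 2 * log L0 + log r := by
  rw [charFn, log_div hL (pow_ne_zero 2 hr), log_pow]
  push_cast
  ring

theorem charFn_innerRadius (hL : 0 < L0) :
    charFn L0 y (innerRadius L0 y) = y (innerRadius L0 y) - y 0 := by
  have hlog : log (innerRadius L0 y) = 1 / 2 * log L0 - y 0 := by
    rw [innerRadius, log_mul (sqrt_pos.2 hL).ne' (exp_ne_zero _), log_exp, log_sqrt hL.le]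
    ring
  rw [charFn_eq_add_log hL.ne' (innerRadius_pos hL).ne', hlog]
  ring

theorem hasDerivAt_charFn {y' : ℝ} (hL : L0 ≠ 0) (hr : r ≠ 0) (hy : HasDerivAt y y' r) :
    HasDerivAt (charFn L0 y) (y' + r⁻¹) r := by
  refine ((hy.sub_const (1 / 2 * log L0)).add (hasDerivAt_log hr)).congr_of_eventuallyEq ?_
  filter_upwards [isOpen_ne.mem_nhds hr] with s hs
  exact charFn_eq_add_log hL hs

end CharFn

namespace QuasiShell

variable {k ℓ L0 r : ℝ} {y : ℝ → ℝ}

theorem differentiableAt (hy : QuasiShell k ℓ L0 y) (hr : 0 < r) : DifferentiableAt ℝ y r :=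
  (hy.2 r hr).2.differentiableAt

theorem deriv_le (hy : QuasiShell k ℓ L0 y) (hl : -(3 / 2) ≤ ℓ) (hr : 0 < r) :
    deriv y r ≤ -(4 * π * r * pres k ℓ L0 y r) := by
  obtain ⟨hmass_lt, hode⟩ := hy.2 r hr
  have hm : 0 ≤ hawkingMass k ℓ L0 y r := hawkingMass_nonneg
  have hp : 0 ≤ pres k ℓ L0 y r := pres_nonneg hl hr
  have hmass_ratio : 0 ≤ 2 * hawkingMass k ℓ L0 y r / r := by positivity
  have hmetric : 1 ≤ (1 - 2 * hawkingMass k ℓ L0 y r / r)⁻¹ :=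
    (one_le_inv₀ (by linarith)).2 (by linarith)
  rw [hode.deriv, neg_mul, neg_le_neg_iff]
  calc 4 * π * r * pres k ℓ L0 y r
      ≤ 4 * π * r * pres k ℓ L0 y r + hawkingMass k ℓ L0 y r / r ^ 2 :=
        le_add_of_nonneg_right (by positivity)
    _ ≤ _ := le_mul_of_one_le_left (by positivity) hmetric

theorem antitoneOn (hy : QuasiShell k ℓ L0 y) (hl : -(3 / 2) ≤ ℓ) : AntitoneOn y (Ici 0) := by
  refine antitoneOn_of_deriv_nonpos (convex_Ici 0) hy.1.continuousOn ?_ ?_ <;> rw [interior_Ici]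
  · exact fun r hr ↦ (hy.differentiableAt hr).differentiableWithinAt
  · intro r (hr : 0 < r)
    have hp : 0 ≤ pres k ℓ L0 y r := pres_nonneg hl hr
    exact (hy.deriv_le hl hr).trans (neg_nonpos.2 (by positivity))

theorem charFn_innerRadius_nonpos (hy : QuasiShell k ℓ L0 y) (hl : -(3 / 2) ≤ ℓ) (hL : 0 < L0) :
    charFn L0 y (innerRadius L0 y) ≤ 0 := by
  have hR₀ : 0 ≤ innerRadius L0 y := (innerRadius_pos hL).le
  rw [charFn_innerRadius hL, sub_nonpos]
  exact hy.antitoneOn hl self_mem_Ici hR₀ hR₀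

theorem charFn_le_radialBarrier (hy : QuasiShell k ℓ L0 y) (hl : -(3 / 2) ≤ ℓ) (hL : 0 < L0)
    {n Cl R : ℝ} (hn : 0 < n) (hCl : 0 < Cl)
    (hp : ∀ r ∈ Icc (innerRadius L0 y) R, 0 ≤ charFn L0 y r →
      Cl * charFn L0 y r ^ n / r ^ 4 ≤ pres k ℓ L0 y r) :
    ∀ r ∈ Icc (innerRadius L0 y) R, charFn L0 y r ≤ radialBarrier (4 * π * Cl) n r := by
  have hK : 0 < 4 * π * Cl := by positivity
  have hR₀ : 0 < innerRadius L0 y := innerRadius_pos hL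
  have hderiv {r : ℝ} (hr : innerRadius L0 y ≤ r) :
      HasDerivAt (charFn L0 y) (deriv y r + r⁻¹) r :=
    have hr₀ : 0 < r := hR₀.trans_le hr
    hasDerivAt_charFn hL.ne' hr₀.ne' (hy.differentiableAt hr₀).hasDerivAt
  refine le_radialBarrier_of_deriv_right_le hK hn hR₀
    (fun r hr ↦ (hderiv hr.1).continuousAt.continuousWithinAt)
    (fun r hr ↦ (hderiv hr.1).hasDerivWithinAt)
    ((hy.charFn_innerRadius_nonpos hl hL).trans (radialBarrier_pos hK hR₀).le)
    fun r hr hγ ↦ ?_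
  have hr₀ : 0 < r := hR₀.trans_le hr.1
  calc deriv y r + r⁻¹ ≤ r⁻¹ - 4 * π * r * pres k ℓ L0 y r := by
        linarith [hy.deriv_le hl hr₀]
    _ ≤ r⁻¹ - 4 * π * r * (Cl * charFn L0 y r ^ n / r ^ 4) := by
        gcongr
        exact hp r (Ico_subset_Icc_self hr) hγ
    _ = r⁻¹ - 4 * π * Cl * charFn L0 y r ^ n / r ^ 3 := by field_simp

end QuasiShell

theorem charFn_power_bound_general {k ℓ L0 : ℝ} (hk : -1 < k) (hl : -1 < ℓ) (hL : 0 < L0)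
    {y : ℝ → ℝ} (hy : QuasiShell k ℓ L0 y) {Cl R : ℝ} (hCl : 0 < Cl)
    (hp : ∀ r ∈ Icc (innerRadius L0 y) R, 0 ≤ charFn L0 y r →
      Cl * charFn L0 y r ^ (k + ℓ + 3 / 2 + 1) / r ^ 4 ≤ pres k ℓ L0 y r) :
    ∀ r ∈ Icc (innerRadius L0 y) R,
      (0 ≤ charFn L0 y r →
        charFn L0 y r ^ (k + ℓ + 3 / 2 + 1) ≤ r ^ 2 / (4 * π * Cl)) ∧
      charFn L0 y r ≤
        (4 * π * Cl) ^ (-(1 / (k + ℓ + 3 / 2 + 1))) * r ^ (2 / (k + ℓ + 3 / 2 + 1)) := by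
  intro r hr
  have hr₀ : 0 ≤ r := (innerRadius_pos hL).le.trans hr.1
  have hn : 0 < k + ℓ + 3 / 2 + 1 := by linarith
  have hγ := hy.charFn_le_radialBarrier (by linarith) hL hn hCl hp r hr
  refine ⟨fun hγ₀ ↦ ?_, hγ⟩
  rw [← radialBarrier_rpow (by positivity) hn.ne' hr₀]
  exact rpow_le_rpow hγ₀ hγ hn.le

/-- If `p(r) ≥ C_l γ(r)^{q+1}/r⁴` on `[R₀,2R₀]` where `γ ≥ 0`, then
`γ(r)^{q+1} ≤ r²/(4πC_l)`, equivalently `γ(r) ≤ C_γ r^{2/(q+1)}`, on `[R₀,2R₀]`. -/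
theorem charFn_power_bound (k ℓ L0 : ℝ) (hk : 0 ≤ k) (hl : -(1 / 2) ≤ ℓ) (hL : 0 < L0)
    (y : ℝ → ℝ) (hy : QuasiShell k ℓ L0 y) (Cl : ℝ) (hCl : 0 < Cl)
    (hp : ∀ r, innerRadius L0 y ≤ r → r ≤ 2 * innerRadius L0 y →
      0 ≤ charFn L0 y r →
      Cl * charFn L0 y r ^ (k + ℓ + 3 / 2 + 1) / r ^ 4 ≤ pres k ℓ L0 y r) :
    ∀ r, innerRadius L0 y ≤ r → r ≤ 2 * innerRadius L0 y →
      (0 ≤ charFn L0 y r →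
        charFn L0 y r ^ (k + ℓ + 3 / 2 + 1) ≤ r ^ 2 / (4 * π * Cl)) ∧
      charFn L0 y r ≤
        (4 * π * Cl) ^ (-(1 / (k + ℓ + 3 / 2 + 1))) * r ^ (2 / (k + ℓ + 3 / 2 + 1)) :=
  fun r hr hr' ↦ charFn_power_bound_general (by linarith) (by linarith) hL hy hCl
    (fun s hs ↦ hp s hs.1 hs.2) r ⟨hr, hr'⟩
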